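/- Let C ⊂ ℝ^{n+d} be a convex body, S = C ∩ (ℤⁿ × ℝ^d), K = proj_{ℝⁿ}(C), and suppose z₀ + k·B∞ⁿ ⊆ K with k ≥ 3e(n+d). Then there exists y* ∈ S such that every closed halfspace H containing y* satisfies H_d(S ∩ H) ≥ (1/(2e)) · H_d(S) ≥ (1/(2ⁿe)) · H_d(S). -/

import Mathlib

/-!
A point deep in `C` for Lebesgue measure is rounded to a lattice point. The Lebesgue-deep point `x`
is the barycentre (Grünbaum): for a linear functional `L`, Prékopa–Leindler makes the distribution
function `F` of `L` on `C` log-concave; bounding `log F` by its tangent line at `L x` and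
integrating gives `log F (L x) ≥ ∫ log F dF ≥ -1`, so every closed halfspace through `x` keeps at
least `1/e` of the volume of `C`.

Since the projection of `C` contains a cube of half-width `k`, some homothety of ratio
`r = 1 - 1/(2k)` centred at a point of `C` moves `x` to a lattice point: varying the centre corrects
any rounding error up to `1/2`. The same correction compares the slice over each point with the
slice over the nearest integer point, so the mixed-integer volumes of `C` and of its halfspace
sections agree with their volumes up to factors `r ^ (n + d)` and homotheties of ratio `r`.
-/

open MeasureTheory Set
open scoped ENNReal

/-- The mixed-integer volume `H_d(A) = Σ_{z ∈ ℤⁿ} vol_d(A_z)`. -/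
noncomputable def mixVol (n d : ℕ) (A : Set ((Fin n → ℝ) × (Fin d → ℝ))) : ℝ≥0∞ :=
  ∑' z : Fin n → ℤ, volume {x : Fin d → ℝ | ((fun i => (z i : ℝ)), x) ∈ A}

/-- The mixed-integer lattice `ℤⁿ × ℝ^d` as a subset of `ℝⁿ × ℝ^d`. -/
def mixLattice (n d : ℕ) : Set ((Fin n → ℝ) × (Fin d → ℝ)) :=
  {p | ∃ z : Fin n → ℤ, p.1 = fun i => (z i : ℝ)}

/-- The standard bilinear pairing on `ℝⁿ × ℝ^d`. -/
def dotP (n d : ℕ) (a y : (Fin n → ℝ) × (Fin d → ℝ)) : ℝ :=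
  (∑ i, a.1 i * y.1 i) + ∑ j, a.2 j * y.2 j

/-- The mixed-integer halfspace depth of a point `y` with respect to `S`:
the infimum of `H_d(S ∩ H)` over closed halfspaces `H` containing `y`. -/
noncomputable def depth (n d : ℕ) (S : Set ((Fin n → ℝ) × (Fin d → ℝ)))
    (y : (Fin n → ℝ) × (Fin d → ℝ)) : ℝ≥0∞ :=
  ⨅ (a : (Fin n → ℝ) × (Fin d → ℝ)) (c : ℝ) (_ : a ≠ 0) (_ : c ≤ dotP n d a y),
    mixVol n d (S ∩ {u | c ≤ dotP n d a u})

/-! ### The Prékopa–Leindler inequality -/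

section PrekopaLeindler

variable {E F : Type*} [AddCommGroup E] [Module ℝ E] [MeasurableSpace E]
  [AddCommGroup F] [Module ℝ F] [MeasurableSpace F]

/-- The functional (Prékopa–Leindler) form of log-concavity of a measure. -/
def IsPrekopaLeindler (μ : Measure E) : Prop :=
  ∀ ⦃a b : ℝ⦄, 0 < a → 0 < b → a + b = 1 → ∀ ⦃f g h : E → ℝ≥0∞⦄,
    Measurable f → Measurable g → Measurable h →
    (∀ x y, f x ^ a * g y ^ b ≤ h (a • x + b • y)) →
    (∫⁻ x, f x ∂μ) ^ a * (∫⁻ x, g x ∂μ) ^ b ≤ ∫⁻ x, h x ∂μ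

namespace IsPrekopaLeindler

variable {μ : Measure E} {ν : Measure F}

theorem dirac (x : E) : IsPrekopaLeindler (Measure.dirac x) := by
  intro a b _ _ hab f g h hf hg hh hfgh
  rw [lintegral_dirac' x hf, lintegral_dirac' x hg, lintegral_dirac' x hh]
  simpa only [← add_smul, hab, one_smul] using hfgh x x

theorem map (hμ : IsPrekopaLeindler μ) {φ : E →ₗ[ℝ] F} (hφ : Measurable φ) :
    IsPrekopaLeindler (μ.map φ) := by
  intro a b ha hb hab f g h hf hg hh hfgh
  rw [lintegral_map hf hφ, lintegral_map hg hφ, lintegral_map hh hφ]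
  refine hμ ha hb hab (hf.comp hφ) (hg.comp hφ) (hh.comp hφ) fun x y => ?_
  simpa only [map_add, map_smul] using hfgh (φ x) (φ y)

theorem prod [SFinite ν] (hμ : IsPrekopaLeindler μ) (hν : IsPrekopaLeindler ν) :
    IsPrekopaLeindler (μ.prod ν) := by
  intro a b ha hb hab f g h hf hg hh hfgh
  rw [lintegral_prod _ hf.aemeasurable, lintegral_prod _ hg.aemeasurable,
    lintegral_prod _ hh.aemeasurable]
  exact hμ ha hb hab hf.lintegral_prod_right' hg.lintegral_prod_right' hh.lintegral_prod_right'
    fun x x' => hν ha hb hab (by fun_prop) (by fun_prop) (by fun_prop)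
      fun y y' => hfgh (x, y) (x', y')

theorem smul (hμ : IsPrekopaLeindler μ) (c : ℝ≥0∞) : IsPrekopaLeindler (c • μ) := by
  intro a b ha hb hab f g h hf hg hh hfgh
  simp only [lintegral_smul_measure, smul_eq_mul]
  calc (c * ∫⁻ x, f x ∂μ) ^ a * (c * ∫⁻ x, g x ∂μ) ^ b
      = c ^ (a + b) * ((∫⁻ x, f x ∂μ) ^ a * (∫⁻ x, g x ∂μ) ^ b) := by
        rw [ENNReal.mul_rpow_of_nonneg _ _ ha.le, ENNReal.mul_rpow_of_nonneg _ _ hb.le,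
          mul_mul_mul_comm, ENNReal.rpow_add_of_nonneg _ _ ha.le hb.le]
    _ ≤ c * ∫⁻ x, h x ∂μ := by
        rw [hab, ENNReal.rpow_one]
        gcongr
        exact hμ ha hb hab hf hg hh hfgh

theorem restrict (hμ : IsPrekopaLeindler μ) {C : Set E} (hC : Convex ℝ C)
    (hCm : MeasurableSet C) : IsPrekopaLeindler (μ.restrict C) := by
  intro a b ha hb hab f g h hf hg hh hfgh
  simp only [← lintegral_indicator hCm]
  refine hμ ha hb hab (hf.indicator hCm) (hg.indicator hCm) (hh.indicator hCm) fun x y => ?_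
  by_cases hx : x ∈ C
  · by_cases hy : y ∈ C
    · simpa only [indicator_of_mem, hx, hy, hC hx hy ha.le hb.le hab] using hfgh x y
    · simp [hy, hb]
  · simp [hx, ha]

theorem measure_rpow_mul_measure_rpow_le (hμ : IsPrekopaLeindler μ) {A B D : Set E}
    (hA : MeasurableSet A) (hB : MeasurableSet B) (hD : MeasurableSet D) {a b : ℝ}
    (ha : 0 < a) (hb : 0 < b) (hab : a + b = 1) (hABD : ∀ x ∈ A, ∀ y ∈ B, a • x + b • y ∈ D) :
    μ A ^ a * μ B ^ b ≤ μ D := by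
  simp only [← lintegral_indicator_one hA, ← lintegral_indicator_one hB,
    ← lintegral_indicator_one hD]
  refine hμ ha hb hab (measurable_one.indicator hA) (measurable_one.indicator hB)
    (measurable_one.indicator hD) fun x y => ?_
  by_cases hx : x ∈ A
  · by_cases hy : y ∈ B
    · simp [hx, hy, hABD x hx y hy]
    · simp [hy, hb]
  · simp [hx, ha]

end IsPrekopaLeindler

end PrekopaLeindler

section RealLine

open Filter Topology
open scoped Pointwise

theorem volume_add_le_volume_add_of_isCompact {K L : Set ℝ} (hK : IsCompact K)
    (hL : IsCompact L) (hK₀ : K.Nonempty) (hL₀ : L.Nonempty) :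
    volume K + volume L ≤ volume (K + L) := by
  obtain ⟨p, hpK, hp⟩ := hK.exists_isGreatest hK₀
  obtain ⟨q, hqL, hq⟩ := hL.exists_isLeast hL₀
  have hdisj : AEDisjoint volume (K + {q}) ({p} + L) := by
    refine measure_mono_null (t := {p + q}) ?_ (by simp)
    rintro _ ⟨⟨x, hx, _, rfl, rfl⟩, ⟨_, rfl, y, hy, hxy⟩⟩
    have := hp hx
    have := hq hy
    simp only [mem_singleton_iff] at hxy ⊢
    linarith
  calc volume K + volume L = volume (K + {q}) + volume ({p} + L) := by simp
    _ = volume ((K + {q}) ∪ ({p} + L)) :=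
        (measure_union₀ (isCompact_singleton.add hL).measurableSet.nullMeasurableSet hdisj).symm
    _ ≤ volume (K + L) := measure_mono <| union_subset
        (add_subset_add_left (singleton_subset_iff.2 hqL))
        (add_subset_add_right (singleton_subset_iff.2 hpK))

theorem volume_add_le_volume_add {A B : Set ℝ} (hA : MeasurableSet A)
    (hB : MeasurableSet B) (hA₀ : A.Nonempty) (hB₀ : B.Nonempty) :
    volume A + volume B ≤ volume (A + B) := by
  obtain ⟨x, hx⟩ := hA₀
  obtain ⟨y, hy⟩ := hB₀
  rw [hA.measure_eq_iSup_isCompact, hB.measure_eq_iSup_isCompact]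
  simp only [iSup_and']
  refine ENNReal.biSup_add_biSup_le' ⟨∅, empty_subset _, isCompact_empty⟩
    ⟨∅, empty_subset _, isCompact_empty⟩ fun K ⟨hKA, hK⟩ L ⟨hLB, hL⟩ => ?_
  calc volume K + volume L ≤ volume (insert x K) + volume (insert y L) := by
        gcongr <;> exact subset_insert _ _
    _ ≤ volume (insert x K + insert y L) :=
        volume_add_le_volume_add_of_isCompact (hK.insert x) (hL.insert y) (insert_nonempty _ _)
          (insert_nonempty _ _)
    _ ≤ volume (A + B) :=
        measure_mono (add_subset_add (insert_subset hx hKA) (insert_subset hy hLB))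

theorem ofReal_mul_volume_add_le {A B D : Set ℝ} (hA : MeasurableSet A)
    (hB : MeasurableSet B) (hA₀ : A.Nonempty) (hB₀ : B.Nonempty) {a b : ℝ} (ha : 0 < a)
    (hb : 0 < b) (hABD : ∀ x ∈ A, ∀ y ∈ B, a • x + b • y ∈ D) :
    ENNReal.ofReal a * volume A + ENNReal.ofReal b * volume B ≤ volume D :=
  calc ENNReal.ofReal a * volume A + ENNReal.ofReal b * volume B
      = volume (a • A) + volume (b • B) := by
        simp [Measure.addHaar_smul, abs_of_pos ha, abs_of_pos hb]
    _ ≤ volume (a • A + b • B) :=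
        volume_add_le_volume_add (hA.const_smul₀ a) (hB.const_smul₀ b) hA₀.smul_set
          hB₀.smul_set
    _ ≤ volume D := measure_mono <| by
        rintro _ ⟨_, ⟨x, hx, rfl⟩, _, ⟨y, hy, rfl⟩, rfl⟩
        exact hABD x hx y hy

theorem volume_Ioi_inter_ofReal_lt (t : ℝ≥0∞) :
    volume (Ioi (0 : ℝ) ∩ {s | ENNReal.ofReal s < t}) = t := by
  induction t with
  | top => simp
  | coe t =>
    have : Ioi (0 : ℝ) ∩ {s | ENNReal.ofReal s < t} = Ioo 0 (t : ℝ) := by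
      ext s
      exact and_congr_right fun hs => by
        rw [mem_ofPred_eq, ENNReal.ofReal_lt_coe_iff hs.le]
    simp [this]

theorem lintegral_eq_lintegral_meas_ofReal_lt {α : Type*} [MeasurableSpace α] (μ : Measure α)
    [SFinite μ] {f : α → ℝ≥0∞} (hf : Measurable f) :
    ∫⁻ x, f x ∂μ = ∫⁻ s in Ioi (0 : ℝ), μ {x | ENNReal.ofReal s < f x} := by
  have hmeas : MeasurableSet {p : α × ℝ | ENNReal.ofReal p.2 < f p.1} :=
    measurableSet_lt (by fun_prop) (by fun_prop)
  calc ∫⁻ x, f x ∂μ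
      = ∫⁻ x, volume.restrict (Ioi (0 : ℝ)) (Prod.mk x ⁻¹' {p | ENNReal.ofReal p.2 < f p.1}) ∂μ :=
        lintegral_congr fun x => by
          rw [Measure.restrict_apply' measurableSet_Ioi, inter_comm]
          exact (volume_Ioi_inter_ofReal_lt (f x)).symm
    _ = ∫⁻ s in Ioi (0 : ℝ), μ ((fun x => (x, s)) ⁻¹' _) := by
        rw [← Measure.prod_apply hmeas, Measure.prod_apply_symm hmeas]
    _ = ∫⁻ s in Ioi (0 : ℝ), μ {x | ENNReal.ofReal s < f x} := rfl

theorem rpow_mul_rpow_le_ofReal_mul_add {a b : ℝ} (ha : 0 < a) (hb : 0 < b)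
    (hab : a + b = 1) (x y : ℝ≥0∞) :
    x ^ a * y ^ b ≤ ENNReal.ofReal a * x + ENNReal.ofReal b * y := by
  have := ENNReal.young_inequality (x ^ a) (y ^ b) (.inv_inv ha hb hab)
  simpa [← ENNReal.rpow_mul, ha.ne', hb.ne', ENNReal.div_eq_inv_mul,
    ENNReal.ofReal_inv_of_pos, ha, hb] using this

theorem lintegral_rpow_mul_lintegral_rpow_le_of_iSup_eq_one {a b : ℝ} (ha : 0 < a) (hb : 0 < b)
    (hab : a + b = 1) {f g h : ℝ → ℝ≥0∞} (hf : Measurable f) (hg : Measurable g)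
    (hh : Measurable h) (hf₁ : ⨆ x, f x = 1) (hg₁ : ⨆ x, g x = 1)
    (hfgh : ∀ x y, f x ^ a * g y ^ b ≤ h (a • x + b • y)) :
    (∫⁻ x, f x) ^ a * (∫⁻ x, g x) ^ b ≤ ∫⁻ x, h x := by
  refine (rpow_mul_rpow_le_ofReal_mul_add ha hb hab _ _).trans ?_
  rw [lintegral_eq_lintegral_meas_ofReal_lt _ hf, lintegral_eq_lintegral_meas_ofReal_lt _ hg,
    lintegral_eq_lintegral_meas_ofReal_lt _ hh]
  have hanti : Antitone fun s : ℝ => volume {x | ENNReal.ofReal s < f x} := fun s t hst =>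
    measure_mono fun x hx => (ENNReal.ofReal_le_ofReal hst).trans_lt hx
  rw [← lintegral_const_mul' _ _ (by simp), ← lintegral_const_mul' _ _ (by simp),
    ← lintegral_add_left (hanti.measurable.const_mul _)]
  refine lintegral_mono fun s => ?_
  generalize ENNReal.ofReal s = s
  rcases lt_or_ge s 1 with hs | hs
  · refine ofReal_mul_volume_add_le (measurableSet_lt measurable_const hf)
      (measurableSet_lt measurable_const hg) (nonempty_def.2 (lt_iSup_iff.1 (hf₁ ▸ hs)))
      (nonempty_def.2 (lt_iSup_iff.1 (hg₁ ▸ hs))) ha hb fun x hx y hy => ?_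
    calc s = s ^ a * s ^ b := by
          rw [← ENNReal.rpow_add_of_nonneg _ _ ha.le hb.le, hab, ENNReal.rpow_one]
      _ < f x ^ a * g y ^ b :=
          ENNReal.mul_lt_mul (ENNReal.rpow_lt_rpow hx ha) (ENNReal.rpow_lt_rpow hy hb)
      _ ≤ h (a • x + b • y) := hfgh x y
  · have hf₀ (x) : ¬ s < f x := ((le_iSup f x).trans (hf₁.le.trans hs)).not_gt
    have hg₀ (x) : ¬ s < g x := ((le_iSup g x).trans (hg₁.le.trans hs)).not_gt
    simp [hf₀, hg₀]

theorem lintegral_rpow_mul_lintegral_rpow_le_of_iSup_ne_top {a b : ℝ} (ha : 0 < a) (hb : 0 < b)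
    (hab : a + b = 1) {f g h : ℝ → ℝ≥0∞} (hf : Measurable f) (hg : Measurable g)
    (hh : Measurable h) (hf₁ : ⨆ x, f x ≠ ∞) (hg₁ : ⨆ x, g x ≠ ∞)
    (hfgh : ∀ x y, f x ^ a * g y ^ b ≤ h (a • x + b • y)) :
    (∫⁻ x, f x) ^ a * (∫⁻ x, g x) ^ b ≤ ∫⁻ x, h x := by
  rcases eq_or_ne (⨆ x, f x) 0 with hf₀ | hf₀
  · simp_all
  rcases eq_or_ne (⨆ x, g x) 0 with hg₀ | hg₀
  · simp_all
  set M := ⨆ x, f x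
  set N := ⨆ x, g x
  have hsplit (u v : ℝ≥0∞) : (M⁻¹ * u) ^ a * (N⁻¹ * v) ^ b =
      (M⁻¹ ^ a * N⁻¹ ^ b) * (u ^ a * v ^ b) := by
    rw [ENNReal.mul_rpow_of_nonneg _ _ ha.le, ENNReal.mul_rpow_of_nonneg _ _ hb.le,
      mul_mul_mul_comm]
  have hc₀ : M⁻¹ ^ a * N⁻¹ ^ b ≠ 0 := by simp_all [not_lt.2 ha.le]
  have hc₁ : M⁻¹ ^ a * N⁻¹ ^ b ≠ ∞ := by
    refine ENNReal.mul_ne_top ?_ ?_ <;>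
      exact ENNReal.rpow_ne_top_of_nonneg (by positivity) (by simp_all)
  have := lintegral_rpow_mul_lintegral_rpow_le_of_iSup_eq_one ha hb hab (hf.const_mul M⁻¹)
    (hg.const_mul N⁻¹) (hh.const_mul (M⁻¹ ^ a * N⁻¹ ^ b))
    (by rw [← ENNReal.mul_iSup, ENNReal.inv_mul_cancel hf₀ hf₁])
    (by rw [← ENNReal.mul_iSup, ENNReal.inv_mul_cancel hg₀ hg₁])
    fun x y => by rw [hsplit]; gcongr; exact hfgh x y
  rwa [lintegral_const_mul _ hf, lintegral_const_mul _ hg, lintegral_const_mul _ hh, hsplit,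
    ENNReal.mul_le_mul_iff_right hc₀ hc₁] at this

theorem tendsto_lintegral_min_natCast {α : Type*} [MeasurableSpace α] (μ : Measure α)
    {f : α → ℝ≥0∞} (hf : Measurable f) :
    Tendsto (fun n : ℕ => ∫⁻ x, min (f x) n ∂μ) atTop (𝓝 (∫⁻ x, f x ∂μ)) := by
  refine lintegral_tendsto_of_tendsto_of_monotone (fun n => by fun_prop)
    (.of_forall fun x m n hmn => min_le_min_left _ (Nat.cast_le.2 hmn)) (.of_forall fun x => ?_)
  simpa using (tendsto_const_nhds (x := f x)).min ENNReal.tendsto_nat_nhds_top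

theorem isPrekopaLeindler_volume_real : IsPrekopaLeindler (volume : Measure ℝ) := by
  intro a b ha hb hab f g h hf hg hh hfgh
  rcases eq_or_ne (∫⁻ x, f x) 0 with hf₀ | hf₀
  · simp [hf₀, ha]
  rcases eq_or_ne (∫⁻ x, g x) 0 with hg₀ | hg₀
  · simp [hg₀, hb]
  have hlim := ENNReal.Tendsto.mul
    ((tendsto_lintegral_min_natCast volume hf).ennrpow_const a)
    (.inl (by simp [hf₀, ha, ha.not_gt]))
    ((tendsto_lintegral_min_natCast volume hg).ennrpow_const b)
    (.inl (by simp [hg₀, hb, hb.not_gt]))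
  have htop (u : ℝ → ℝ≥0∞) (n : ℕ) : ⨆ x, min (u x) n ≠ ∞ :=
    ne_top_of_le_ne_top (ENNReal.natCast_ne_top n) (iSup_le fun _ => min_le_right _ _)
  refine le_of_tendsto' hlim fun n =>
    lintegral_rpow_mul_lintegral_rpow_le_of_iSup_ne_top ha hb hab (by fun_prop) (by fun_prop) hh
      (htop f n) (htop g n) fun x y => le_trans ?_ (hfgh x y)
  gcongr <;> exact min_le_left _ _

theorem isPrekopaLeindler_volume_pi (n : ℕ) :
    IsPrekopaLeindler (volume : Measure (Fin n → ℝ)) := by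
  induction n with
  | zero =>
    rw [volume_pi, Measure.pi_of_empty]
    exact .dirac _
  | succ n ih =>
    have hpres := (volume_preserving_piFinSuccAbove (fun _ : Fin (n + 1) => ℝ) 0).symm
    have hcons : ⇑(MeasurableEquiv.piFinSuccAbove (fun _ : Fin (n + 1) => ℝ) 0).symm =
        Fin.consLinearEquiv ℝ fun _ : Fin (n + 1) => ℝ :=
      funext fun x => Fin.insertNth_zero' x.1 x.2
    rw [← hpres.map_eq, hcons]
    exact (isPrekopaLeindler_volume_real.prod ih).map
      (φ := (Fin.consLinearEquiv ℝ fun _ : Fin (n + 1) => ℝ).toLinearMap)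
      (by simpa [← hcons] using hpres.measurable)

end RealLine

/-! ### Grünbaum's inequality -/

section Grunbaum

open ProbabilityTheory

theorem exists_le_add_mul_of_mem_interior {s : Set ℝ} {φ : ℝ → ℝ} (hφ : ConcaveOn ℝ s φ)
    {m : ℝ} (hm : m ∈ interior s) : ∃ c, ∀ x ∈ s, φ x ≤ φ m + c * (x - m) := by
  have hψ := hφ.neg
  refine ⟨-derivWithin (-φ) (Ioi m) m, fun x hx => ?_⟩
  rcases lt_trichotomy x m with hxm | rfl | hmx
  · have := (hψ.slope_le_leftDeriv_of_mem_interior hx hm hxm).trans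
      (hψ.leftDeriv_le_rightDeriv_of_mem_interior hm)
    rw [slope_def_field, div_le_iff₀ (sub_pos.2 hxm)] at this
    simp only [Pi.neg_apply] at this
    linarith
  · simp
  · have := hψ.rightDeriv_le_slope_of_mem_interior hm hx hmx
    rw [slope_def_field, le_div_iff₀ (sub_pos.2 hmx)] at this
    simp only [Pi.neg_apply] at this
    linarith

variable (μ : Measure ℝ)

theorem neg_log_cdf_nonneg (x : ℝ) : 0 ≤ -Real.log (cdf μ x) :=
  neg_nonneg.2 (Real.log_nonpos (cdf_nonneg μ x) (cdf_le_one μ x))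

theorem measurable_log_cdf : Measurable fun x => Real.log (cdf μ x) :=
  (monotone_cdf μ).measurable.log

variable [IsProbabilityMeasure μ]

theorem measure_cdf_le_le (r : ℝ) : μ {x | cdf μ x ≤ r} ≤ ENNReal.ofReal r := by
  have hmeas : MeasurableSet {x | cdf μ x ≤ r} :=
    measurableSet_le (monotone_cdf μ).measurable measurable_const
  rw [hmeas.measure_eq_iSup_isCompact]
  refine iSup₂_le fun K hK => iSup_le fun hKc => ?_
  rcases K.eq_empty_or_nonempty with rfl | hK₀
  · simp
  obtain ⟨p, hpK, hp⟩ := hKc.exists_isGreatest hK₀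
  calc μ K ≤ μ (Iic p) := measure_mono hp
    _ = ENNReal.ofReal (cdf μ p) := (ofReal_cdf μ p).symm
    _ ≤ ENNReal.ofReal r := ENNReal.ofReal_le_ofReal (hK hpK)

theorem ae_cdf_pos : ∀ᵐ x ∂μ, 0 < cdf μ x := by
  simpa [ae_iff] using! measure_cdf_le_le μ 0

theorem lintegral_neg_log_cdf_le_one : ∫⁻ x, ENNReal.ofReal (-Real.log (cdf μ x)) ∂μ ≤ 1 :=
  calc ∫⁻ x, ENNReal.ofReal (-Real.log (cdf μ x)) ∂μ
      = ∫⁻ t in Ioi (0 : ℝ), μ {x | t < -Real.log (cdf μ x)} :=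
        lintegral_eq_lintegral_meas_lt _ (.of_forall (neg_log_cdf_nonneg μ))
          (measurable_log_cdf μ).neg.aemeasurable
    _ ≤ ∫⁻ t in Ioi (0 : ℝ), ENNReal.ofReal (Real.exp (-t)) := by
        refine lintegral_mono fun t => (measure_mono fun x hx => ?_).trans (measure_cdf_le_le μ _)
        rw [mem_ofPred_eq] at hx ⊢
        by_contra! hlt
        have := Real.log_le_log (Real.exp_pos _) hlt.le
        rw [Real.log_exp] at this
        linarith
    _ = 1 := by
        rw [← ofReal_integral_eq_lintegral_ofReal (integrableOn_exp_neg_Ioi 0)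
          (.of_forall fun _ => (Real.exp_pos _).le), integral_exp_neg_Ioi_zero, ENNReal.ofReal_one]

theorem integrable_log_cdf : Integrable (fun x => Real.log (cdf μ x)) μ := by
  refine integrable_neg_iff.1 ⟨(measurable_log_cdf μ).neg.aestronglyMeasurable, ?_⟩
  exact (hasFiniteIntegral_iff_ofReal (.of_forall (neg_log_cdf_nonneg μ))).2
    ((lintegral_neg_log_cdf_le_one μ).trans_lt ENNReal.one_lt_top)

theorem neg_one_le_integral_log_cdf : -1 ≤ ∫ x, Real.log (cdf μ x) ∂μ := by
  rw [neg_le, ← integral_neg,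
    integral_eq_lintegral_of_nonneg_ae (.of_forall (neg_log_cdf_nonneg μ))
      (measurable_log_cdf μ).neg.aestronglyMeasurable]
  exact ENNReal.toReal_le_of_le_ofReal zero_le_one (by simpa using lintegral_neg_log_cdf_le_one μ)

variable {μ}

theorem IsPrekopaLeindler.concaveOn_log_cdf (hμ : IsPrekopaLeindler μ) :
    ConcaveOn ℝ {x | 0 < cdf μ x} fun x => Real.log (cdf μ x) := by
  have hord : OrdConnected {x | 0 < cdf μ x} :=
    ⟨fun x hx _ _ z hz => hx.trans_le (monotone_cdf μ hz.1)⟩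
  refine concaveOn_iff_forall_pos.2 ⟨hord.convex, fun x hx y hy a b ha hb hab => ?_⟩
  have hlc := ENNReal.toReal_mono (measure_ne_top _ _) <|
    hμ.measure_rpow_mul_measure_rpow_le (measurableSet_Iic (a := x)) (measurableSet_Iic (a := y))
      (measurableSet_Iic (a := a • x + b • y)) ha hb hab fun u hu v hv =>
        mem_Iic.2 <| add_le_add (smul_le_smul_of_nonneg_left hu ha.le)
          (smul_le_smul_of_nonneg_left hv hb.le)
  rw [ENNReal.toReal_mul, ← ENNReal.toReal_rpow, ← ENNReal.toReal_rpow] at hlc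
  simp only [← measureReal_def, ← cdf_eq_real] at hlc
  rw [mem_ofPred_eq] at hx hy
  simpa only [smul_eq_mul, Real.log_mul (Real.rpow_pos_of_pos hx a).ne'
    (Real.rpow_pos_of_pos hy b).ne', Real.log_rpow hx, Real.log_rpow hy]
    using Real.log_le_log (by positivity) hlc

theorem IsPrekopaLeindler.exp_neg_one_le_cdf_of_integral_lt (hμ : IsPrekopaLeindler μ)
    (hint : Integrable (fun x => x) μ) {t : ℝ} (ht : ∫ x, x ∂μ < t) :
    Real.exp (-1) ≤ cdf μ t := by
  set m := ∫ x, x ∂μ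
  have hm : 0 < cdf μ m := by
    rw [← ENNReal.ofReal_pos, ofReal_cdf]
    exact measure_le_integral_pos hint
  have hpos {x : ℝ} (hx : m ≤ x) : 0 < cdf μ x := hm.trans_le (monotone_cdf μ hx)
  have hinterior : t ∈ interior {x | 0 < cdf μ x} :=
    mem_interior.2 ⟨Ioi m, fun x hx => hpos (le_of_lt hx), isOpen_Ioi, ht⟩
  obtain ⟨c, hc⟩ := exists_le_add_mul_of_mem_interior hμ.concaveOn_log_cdf hinterior
  have hc₀ : 0 ≤ c := by
    have hup := hc (t + 1) (hpos (by linarith))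
    have := Real.log_le_log (hpos ht.le) (monotone_cdf μ (le_add_of_nonneg_right zero_le_one :
      t ≤ t + 1))
    linarith
  have hintc : Integrable (fun x => c * (x - t)) μ := (hint.sub (integrable_const t)).const_mul c
  rw [← Real.le_log_iff_exp_le (hpos ht.le)]
  calc -1 ≤ ∫ x, Real.log (cdf μ x) ∂μ := neg_one_le_integral_log_cdf μ
    _ ≤ ∫ x, (Real.log (cdf μ t) + c * (x - t)) ∂μ :=
        integral_mono_ae (integrable_log_cdf μ) ((integrable_const _).add hintc)
          ((ae_cdf_pos μ).mono fun x hx => hc x hx)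
    _ = Real.log (cdf μ t) - c * (t - m) := by
        rw [integral_add (integrable_const _) hintc, integral_const_mul,
          integral_sub hint (integrable_const t)]
        simp only [integral_const, probReal_univ, one_smul]
        ring
    _ ≤ Real.log (cdf μ t) := sub_le_self _ (mul_nonneg hc₀ (sub_nonneg.2 ht.le))

theorem IsPrekopaLeindler.exp_neg_one_le_cdf_integral (hμ : IsPrekopaLeindler μ)
    (hint : Integrable (fun x => x) μ) : Real.exp (-1) ≤ cdf μ (∫ x, x ∂μ) :=
  ge_of_tendsto (((cdf μ).right_continuous _).mono_left (nhdsWithin_mono _ Ioi_subset_Ici_self))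
    (eventually_nhdsWithin_of_forall fun _ => hμ.exp_neg_one_le_cdf_of_integral_lt hint)

section HalfSpace

variable {E : Type*} [NormedAddCommGroup E] [NormedSpace ℝ E] [MeasurableSpace E] [BorelSpace E]

theorem IsPrekopaLeindler.exp_neg_one_le_measureReal_le_integral [CompleteSpace E]
    {P : Measure E} [IsProbabilityMeasure P]
    (hP : IsPrekopaLeindler P) (hint : Integrable (fun u => u) P) (L : E →L[ℝ] ℝ) :
    Real.exp (-1) ≤ P.real {u | L u ≤ L (∫ u, u ∂P)} := by
  have hL : Measurable L := L.measurable
  have := Measure.isProbabilityMeasure_map (μ := P) hL.aemeasurable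
  have hmap : IsPrekopaLeindler (P.map L) := hP.map (φ := L.toLinearMap) hL
  have hintL : Integrable (fun x => x) (P.map L) :=
    (integrable_map_measure (by fun_prop) hL.aemeasurable).2 (L.integrable_comp hint)
  have := hmap.exp_neg_one_le_cdf_integral hintL
  rwa [integral_map hL.aemeasurable (by fun_prop), L.integral_comp_comm hint, cdf_eq_real,
    map_measureReal_apply hL measurableSet_Iic] at this

theorem IsPrekopaLeindler.exists_exp_neg_one_mul_measureReal_le [FiniteDimensional ℝ E]
    {μ : Measure E} [IsFiniteMeasureOnCompacts μ] (hμ : IsPrekopaLeindler μ) {C : Set E}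
    (hconv : Convex ℝ C) (hcomp : IsCompact C) (hC₀ : C.Nonempty) :
    ∃ x ∈ C, ∀ L : E →L[ℝ] ℝ,
      Real.exp (-1) * μ.real C ≤ μ.real (C ∩ {u | L x ≤ L u}) := by
  rcases eq_or_ne (μ C) 0 with hC | hC
  · obtain ⟨x, hx⟩ := hC₀
    exact ⟨x, hx, fun L => by simp [measureReal_def, hC]⟩
  have hCm := hcomp.measurableSet
  have hCtop : μ C ≠ ∞ := hcomp.measure_lt_top.ne
  have := cond_isProbabilityMeasure_of_finite hC hCtop
  have hP : IsPrekopaLeindler μ[|C] := (hμ.restrict hconv hCm).smul _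
  have hint : Integrable (fun u => u) μ[|C] :=
    (continuous_id.continuousOn.integrableOn_compact hcomp).smul_measure (by simp [hC])
  refine ⟨∫ u, u ∂μ[|C], hconv.integral_mem hcomp.isClosed (ae_cond_mem hCm) hint, fun L => ?_⟩
  have := hP.exp_neg_one_le_measureReal_le_integral hint (-L)
  simp only [neg_apply, neg_le_neg_iff] at this
  rwa [measureReal_def, cond_apply hCm, ENNReal.toReal_mul, ENNReal.toReal_inv, ← div_eq_inv_mul,
    le_div_iff₀ (ENNReal.toReal_pos hC hCtop)] at this

end HalfSpace

end Grunbaum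

/-! ### Comparing volume and mixed-integer volume by homotheties -/

section Homothety

open AffineMap

variable {E : Type*} [NormedAddCommGroup E] [NormedSpace ℝ E] [FiniteDimensional ℝ E]
  [MeasurableSpace E] [BorelSpace E] (μ : Measure E) [μ.IsAddHaarMeasure]

theorem ofReal_pow_finrank_mul_measure_le {p : E} {r : ℝ} (hr : 0 ≤ r) {A B : Set E}
    (hAB : MapsTo (homothety p r) A B) :
    ENNReal.ofReal (r ^ Module.finrank ℝ E) * μ A ≤ μ B := by
  have := Measure.addHaar_image_homothety μ p r A
  rw [abs_of_nonneg (by positivity)] at this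
  exact this.symm.trans_le (measure_mono hAB.image_subset)

theorem ofReal_pow_finrank_mul_lintegral_comp_homothety (p : E) {r : ℝ} (hr : 0 < r)
    {f : E → ℝ≥0∞} (hf : Measurable f) :
    ENNReal.ofReal (r ^ Module.finrank ℝ E) * ∫⁻ x, f (homothety p r x) ∂μ = ∫⁻ x, f x ∂μ := by
  have hmeas : Measurable (homothety p r) := by
    simp only [coe_homothety, vsub_eq_sub, vadd_eq_add]
    fun_prop
  have hmap : μ.map (homothety p r) = ENNReal.ofReal (r ^ Module.finrank ℝ E)⁻¹ • μ := by
    ext s hs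
    have hpre : homothety p r ⁻¹' s = homothety p r⁻¹ '' s :=
      (congrFun (image_eq_preimage_of_inverse
        (fun x => by simp [homothety_apply, hr.ne'])
        fun x => by simp [homothety_apply, hr.ne']) s).symm
    rw [Measure.map_apply hmeas hs, hpre, Measure.addHaar_image_homothety, inv_pow,
      abs_of_pos (by positivity), Measure.smul_apply, smul_eq_mul]
  rw [← lintegral_map hf hmeas, hmap, lintegral_smul_measure, smul_eq_mul, ← mul_assoc,
    ← ENNReal.ofReal_mul (by positivity), mul_inv_cancel₀ (by positivity), ENNReal.ofReal_one,
    one_mul]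

end Homothety

section MixedVolume

open AffineMap

theorem measurable_round_pi (n : ℕ) :
    Measurable fun (v : Fin n → ℝ) i => round (v i) := by
  simp only [round_eq]
  fun_prop

theorem map_round_volume (n : ℕ) :
    (volume : Measure (Fin n → ℝ)).map (fun v i => round (v i)) = Measure.count := by
  refine Measure.ext_of_singleton fun z => ?_
  have hcell : (fun (v : Fin n → ℝ) i => round (v i)) ⁻¹' {z} =
      univ.pi fun i => Ico ((z i : ℝ) - 1 / 2) (z i + 1 / 2) := by
    ext v
    simp only [mem_preimage, mem_singleton_iff, funext_iff, round_eq_iff, mem_univ_pi]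
  rw [Measure.map_apply (measurable_round_pi n) (measurableSet_singleton z), hcell,
    Real.volume_pi_Ico, Measure.count_singleton]
  norm_num

variable {n d : ℕ} {A B C : Set ((Fin n → ℝ) × (Fin d → ℝ))}

theorem mixVol_eq_lintegral (A : Set ((Fin n → ℝ) × (Fin d → ℝ))) :
    mixVol n d A =
      ∫⁻ v : Fin n → ℝ, volume {x : Fin d → ℝ | ((fun i => (round (v i) : ℝ)), x) ∈ A} := by
  rw [mixVol, ← lintegral_count, ← map_round_volume,
    lintegral_map .of_discrete (measurable_round_pi n)]

theorem mixVol_inter_mixLattice (A : Set ((Fin n → ℝ) × (Fin d → ℝ))) :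
    mixVol n d (A ∩ mixLattice n d) = mixVol n d A :=
  tsum_congr fun z => congrArg volume (Set.ext fun _ => and_iff_left ⟨z, rfl⟩)

variable {z₀ : Fin n → ℝ} {k r : ℝ}

theorem exists_mem_homothety_fst_eq (hbox : Metric.closedBall z₀ k ⊆ Prod.fst '' C)
    (hr : r < 1) (hrk : 1 / 2 ≤ (1 - r) * k) {w z : Fin n → ℝ}
    (hwz : dist z (homothety z₀ r w) ≤ 1 / 2) : ∃ p ∈ C, homothety p.1 r w = z := by
  have hr' : 0 < 1 - r := sub_pos.2 hr
  have hz : homothety ((1 - r)⁻¹ • (z - r • w)) r w = z := by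
    ext i
    simp only [homothety_apply, vsub_eq_sub, vadd_eq_add, Pi.add_apply, Pi.sub_apply, Pi.smul_apply,
      smul_eq_mul]
    field_simp
    ring
  have hmem : (1 - r)⁻¹ • (z - r • w) ∈ Metric.closedBall z₀ k := by
    have : (1 - r)⁻¹ • (z - r • w) - z₀ = (1 - r)⁻¹ • (z - homothety z₀ r w) := by
      ext i
      simp only [homothety_apply, vsub_eq_sub, vadd_eq_add, Pi.add_apply, Pi.sub_apply,
        Pi.smul_apply, smul_eq_mul]
      field_simp
      ring
    rw [mem_closedBall_iff_norm, this, norm_smul, norm_inv, Real.norm_of_nonneg hr'.le,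
      inv_mul_le_iff₀ hr', ← dist_eq_norm]
    exact hwz.trans hrk
  obtain ⟨p, hp, hpz⟩ := hbox hmem
  exact ⟨p, hp, by rw [hpz, hz]⟩

theorem ofReal_pow_mul_volume_slice_le (hbox : Metric.closedBall z₀ k ⊆ Prod.fst '' C)
    (hr₀ : 0 ≤ r) (hr₁ : r < 1) (hrk : 1 / 2 ≤ (1 - r) * k)
    (hAB : ∀ p ∈ C, MapsTo (homothety p r) A B) {w z : Fin n → ℝ}
    (hwz : dist z (homothety z₀ r w) ≤ 1 / 2) :
    ENNReal.ofReal (r ^ d) * volume {x : Fin d → ℝ | (w, x) ∈ A} ≤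
      volume {x : Fin d → ℝ | (z, x) ∈ B} := by
  obtain ⟨p, hp, rfl⟩ := exists_mem_homothety_fst_eq hbox hr₁ hrk hwz
  have := ofReal_pow_finrank_mul_measure_le volume (p := p.2) hr₀
    (A := {x : Fin d → ℝ | (w, x) ∈ A}) (B := {x | (homothety p.1 r w, x) ∈ B})
    fun x hx => hAB p hp hx
  rwa [Module.finrank_fin_fun] at this

theorem dist_round_le (v : Fin n → ℝ) : dist (fun i => (round (v i) : ℝ)) v ≤ 1 / 2 :=
  (dist_pi_le_iff (by norm_num)).2 fun i => by
    rw [dist_comm, Real.dist_eq]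
    exact abs_sub_round (v i)

theorem ofReal_pow_mul_volume_le_mixVol (hbox : Metric.closedBall z₀ k ⊆ Prod.fst '' C)
    (hr₀ : 0 < r) (hr₁ : r < 1) (hrk : 1 / 2 ≤ (1 - r) * k) (hA : MeasurableSet A)
    (hAB : ∀ p ∈ C, MapsTo (homothety p r) A B) :
    ENNReal.ofReal (r ^ (n + d)) * volume A ≤ mixVol n d B := by
  have hmeas : Measurable fun v : Fin n → ℝ =>
      volume {x : Fin d → ℝ | ((fun i => (round (v i) : ℝ)), x) ∈ B} :=
    Measurable.comp (g := fun z : Fin n → ℤ => volume {x | ((fun i => (z i : ℝ)), x) ∈ B})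
      .of_discrete (measurable_round_pi n)
  calc ENNReal.ofReal (r ^ (n + d)) * volume A
      = ENNReal.ofReal (r ^ n) *
          ∫⁻ w, ENNReal.ofReal (r ^ d) * volume {x : Fin d → ℝ | (w, x) ∈ A} := by
        rw [Measure.volume_eq_prod, Measure.prod_apply hA, pow_add,
          ENNReal.ofReal_mul (by positivity), mul_assoc,
          lintegral_const_mul' _ _ ENNReal.ofReal_ne_top]
        rfl
    _ ≤ ENNReal.ofReal (r ^ n) * ∫⁻ w, volume
          {x : Fin d → ℝ | ((fun i => (round (homothety z₀ r w i) : ℝ)), x) ∈ B} := by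
        gcongr with w
        exact ofReal_pow_mul_volume_slice_le hbox hr₀.le hr₁ hrk hAB (dist_round_le _)
    _ = mixVol n d B := by
        rw [mixVol_eq_lintegral,
          ← ofReal_pow_finrank_mul_lintegral_comp_homothety volume z₀ hr₀ hmeas,
          Module.finrank_fin_fun]

theorem ofReal_pow_mul_mixVol_le_volume (hbox : Metric.closedBall z₀ k ⊆ Prod.fst '' C)
    (hr₀ : 0 < r) (hr₁ : r < 1) (hrk : 1 / 2 ≤ (1 - r) * k) (hB : MeasurableSet B)
    (hAB : ∀ p ∈ C, MapsTo (homothety p r) A B) :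
    ENNReal.ofReal (r ^ (n + d)) * mixVol n d A ≤ volume B := by
  have hdist (w : Fin n → ℝ) :
      dist (homothety z₀ r w) (homothety z₀ r fun i => (round (w i) : ℝ)) ≤ 1 / 2 := by
    simp only [homothety_apply, vsub_eq_sub, vadd_eq_add, dist_add_right, dist_smul₀,
      dist_sub_right, Real.norm_of_nonneg hr₀.le, dist_comm w]
    exact (mul_le_of_le_one_left dist_nonneg hr₁.le).trans (dist_round_le w)
  calc ENNReal.ofReal (r ^ (n + d)) * mixVol n d A
      = ENNReal.ofReal (r ^ n) * ∫⁻ w : Fin n → ℝ, ENNReal.ofReal (r ^ d) *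
          volume {x : Fin d → ℝ | ((fun i => (round (w i) : ℝ)), x) ∈ A} := by
        rw [mixVol_eq_lintegral, pow_add, ENNReal.ofReal_mul (by positivity), mul_assoc,
          lintegral_const_mul' _ _ ENNReal.ofReal_ne_top]
    _ ≤ ENNReal.ofReal (r ^ n) *
          ∫⁻ w, volume {x : Fin d → ℝ | (homothety z₀ r w, x) ∈ B} := by
        gcongr with w
        exact ofReal_pow_mul_volume_slice_le hbox hr₀.le hr₁ hrk hAB (hdist w)
    _ = volume B := by
        rw [Measure.volume_eq_prod, Measure.prod_apply hB,
          ← ofReal_pow_finrank_mul_lintegral_comp_homothety volume z₀ hr₀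
            (measurable_measure_prodMk_left hB), Module.finrank_fin_fun]
        rfl

end MixedVolume

section HomothetyHalfspace

open AffineMap

variable {E : Type*} [NormedAddCommGroup E] [NormedSpace ℝ E] {C : Set E} {p u x : E} {r t : ℝ}

theorem map_homothety_eq (L : E →L[ℝ] ℝ) (p u : E) (r : ℝ) :
    L (homothety p r u) = (1 - r) * L p + r * L u := by
  simp only [homothety_apply, vsub_eq_sub, vadd_eq_add, map_add, map_smul, map_sub, smul_eq_mul]
  ring

theorem homothety_mem_of_convex (hC : Convex ℝ C) (hp : p ∈ C) (hu : u ∈ C) (hr₀ : 0 ≤ r)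
    (hr₁ : r ≤ 1) : homothety p r u ∈ C := by
  rw [homothety_eq_lineMap]
  exact hC.lineMap_mem hp hu ⟨hr₀, hr₁⟩

theorem mapsTo_homothety_inter_superlevel (hC : Convex ℝ C) (hp : p ∈ C) (hr₀ : 0 ≤ r)
    (hr₁ : r ≤ 1) {L : E →L[ℝ] ℝ} {s t : ℝ} (hst : s ≤ (1 - r) * L p + r * t) :
    MapsTo (homothety p r) (C ∩ {v | t ≤ L v}) (C ∩ {v | s ≤ L v}) := by
  refine fun v ⟨hv, hvt⟩ => ⟨homothety_mem_of_convex hC hp hv hr₀ hr₁, ?_⟩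
  rw [mem_ofPred_eq, map_homothety_eq]
  exact hst.trans (by gcongr; exact hvt)

variable [FiniteDimensional ℝ E] [MeasurableSpace E] [BorelSpace E] (μ : Measure E)
  [μ.IsAddHaarMeasure]

theorem pow_finrank_mul_measureReal_le (hr : 0 ≤ r) {A B : Set E}
    (hAB : MapsTo (homothety p r) A B) (hB : μ B ≠ ∞) :
    r ^ Module.finrank ℝ E * μ.real A ≤ μ.real B := by
  have := ENNReal.toReal_mono hB (ofReal_pow_finrank_mul_measure_le μ hr hAB)
  rwa [ENNReal.toReal_mul, ENNReal.toReal_ofReal (by positivity)] at this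

/- The homothety towards `p` does not shrink the superlevel set at `x` too much, and the homothety
towards `u` does not shrink the complement of the superlevel set at `t` too much. -/
theorem mul_measureReal_le_mul_measureReal_superlevel (hconv : Convex ℝ C) (hcomp : IsCompact C)
    (L : E →L[ℝ] ℝ) {δ : ℝ} (hx : δ * μ.real C ≤ μ.real (C ∩ {v | L x ≤ L v}))
    (hp : p ∈ C) (hu : u ∈ C) (hr₀ : 0 < r) (hr₁ : r ≤ 1)
    (ht : (1 - r) * L u + r * t = L (homothety p r x)) :
    (r ^ Module.finrank ℝ E * (1 + δ) - 1) * μ.real C ≤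
      r ^ Module.finrank ℝ E * μ.real (C ∩ {v | t ≤ L v}) := by
  have hfin {A : Set E} (hA : A ⊆ C) : μ A ≠ ∞ :=
    measure_ne_top_of_subset hA hcomp.measure_lt_top.ne
  have hsplit (s : ℝ) :
      μ.real (C ∩ {v | s ≤ L v}) + μ.real (C \ {v | s ≤ L v}) = μ.real C :=
    measureReal_inter_add_sdiff (measurableSet_le measurable_const L.continuous.measurable)
      (hfin subset_rfl)
  have hsuper : r ^ Module.finrank ℝ E * μ.real (C ∩ {v | L x ≤ L v}) ≤
      μ.real (C ∩ {v | L (homothety p r x) ≤ L v}) :=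
    pow_finrank_mul_measureReal_le μ hr₀.le (mapsTo_homothety_inter_superlevel hconv hp hr₀.le hr₁
      (map_homothety_eq L p x r).le) (hfin inter_subset_left)
  have hsub : r ^ Module.finrank ℝ E * μ.real (C \ {v | t ≤ L v}) ≤
      μ.real (C \ {v | L (homothety p r x) ≤ L v}) := by
    refine pow_finrank_mul_measureReal_le (p := u) μ hr₀.le (fun v hv => ?_)
      (hfin sdiff_subset)
    refine ⟨homothety_mem_of_convex hconv hu hv.1 hr₀.le hr₁, ?_⟩
    have hv : L v < t := not_le.1 hv.2
    simp only [mem_ofPred_eq, not_le, ← ht, map_homothety_eq]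
    gcongr
  have hxq := mul_le_mul_of_nonneg_left hx (pow_nonneg hr₀.le (Module.finrank ℝ E))
  linear_combination hxq + hsuper + hsub + hsplit (L (homothety p r x)) -
    r ^ Module.finrank ℝ E * hsplit t

end HomothetyHalfspace

section Depth

open AffineMap

theorem isAddHaarMeasure_volume_prod (n d : ℕ) :
    (volume : Measure ((Fin n → ℝ) × (Fin d → ℝ))).IsAddHaarMeasure := by
  rw [Measure.volume_eq_prod]
  exact Measure.prod.instIsAddHaarMeasure _ _

theorem isPrekopaLeindler_volume_prod (n d : ℕ) :
    IsPrekopaLeindler (volume : Measure ((Fin n → ℝ) × (Fin d → ℝ))) :=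
  (isPrekopaLeindler_volume_pi n).prod (isPrekopaLeindler_volume_pi d)

/-- The pairing `dotP n d a` with a fixed vector `a`, as a continuous linear functional. -/
noncomputable def dotL (n d : ℕ) (a : (Fin n → ℝ) × (Fin d → ℝ)) :
    ((Fin n → ℝ) × (Fin d → ℝ)) →L[ℝ] ℝ :=
  LinearMap.toContinuousLinearMap
    { toFun := dotP n d a
      map_add' := fun u v => by
        simp only [dotP, Prod.fst_add, Prod.snd_add, Pi.add_apply, mul_add, Finset.sum_add_distrib]
        ring
      map_smul' := fun s u => by
        simp only [dotP, Prod.smul_fst, Prod.smul_snd, Pi.smul_apply, smul_eq_mul,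
          mul_left_comm, Finset.mul_sum, mul_add, RingHom.id_apply] }

/-- The ratio `1 - 1/(2k)` of the homotheties used for rounding: when their centre ranges over a
cube of half-width `k` in the sup norm, the image of a fixed point ranges over one of half-width
`1/2`, which contains an integer point. -/
noncomputable def roundingRatio (k : ℝ) : ℝ :=
  1 - 1 / (2 * k)

theorem roundingRatio_lt_one {k : ℝ} (hk : 0 < k) : roundingRatio k < 1 :=
  sub_lt_self _ (by positivity)

theorem roundingRatio_pos {k : ℝ} (hk : 1 / 2 < k) : 0 < roundingRatio k := by
  rw [roundingRatio, sub_pos, div_lt_one (by linarith)]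
  linarith

theorem one_sub_roundingRatio_mul {k : ℝ} (hk : k ≠ 0) : (1 - roundingRatio k) * k = 1 / 2 := by
  rw [roundingRatio]
  field_simp
  norm_num

/-- A lower bound for the fraction of the mixed-integer volume of a convex body in dimension `m`
in every halfspace through a suitable lattice point, when the projection of the body contains a
cube of half-width `k`. With `q` the volume ratio of the homotheties used for rounding, Grünbaum's
`1/e` becomes `(q (1 + 1/e) - 1) / q` for the body, and passing from its mixed-integer volume to
its volume and back costs a factor `q` each time. -/
noncomputable def depthBound (k : ℝ) (m : ℕ) : ℝ :=
  roundingRatio k ^ m * (roundingRatio k ^ m * (1 + Real.exp (-1)) - 1)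

theorem half_le_mul_mul_one_add_sub_one {q δ : ℝ} (hδ₀ : 0 ≤ δ) (hδ₁ : δ ≤ 1) (hq : 1 - δ / 6 ≤ q) :
    δ / 2 ≤ q * (q * (1 + δ) - 1) := by
  have hfactor : 1 - (1 - δ / 6) * (1 + δ) ≤ 0 := by nlinarith
  nlinarith [mul_le_mul_of_nonneg_right hq (by linarith : 0 ≤ 1 + δ)]

theorem half_exp_neg_one_le_depthBound {k : ℝ} {m : ℕ} (hm : 1 ≤ m)
    (hk : 3 * Real.exp 1 * m ≤ k) : Real.exp (-1) / 2 ≤ depthBound k m := by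
  have hm' : (1 : ℝ) ≤ m := by exact_mod_cast hm
  have he : 1 ≤ Real.exp 1 := Real.one_le_exp zero_le_one
  have hk₁ : 1 ≤ k := by nlinarith
  refine half_le_mul_mul_one_add_sub_one (Real.exp_nonneg _)
    (Real.exp_le_one_iff.2 (by norm_num)) ?_
  have hbernoulli := one_add_mul_le_pow (a := -(1 / (2 * k)))
    (by rw [neg_le_neg_iff, div_le_iff₀ (by positivity)]; linarith) m
  have hwidth : m * (1 / (2 * k)) ≤ Real.exp (-1) / 6 := by
    rw [Real.exp_neg, mul_one_div, inv_eq_one_div, div_div,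
      div_le_div_iff₀ (by positivity) (by positivity)]
    linarith
  rw [← sub_eq_add_neg, ← roundingRatio] at hbernoulli
  linarith

variable {n d : ℕ} {C : Set ((Fin n → ℝ) × (Fin d → ℝ))} {z₀ : Fin n → ℝ} {k c : ℝ}

theorem ofReal_depthBound_mul_mixVol_le (hconv : Convex ℝ C) (hcomp : IsCompact C)
    (hk : 1 / 2 < k) (hbox : Metric.closedBall z₀ k ⊆ Prod.fst '' C)
    (L : ((Fin n → ℝ) × (Fin d → ℝ)) →L[ℝ] ℝ) {x p : (Fin n → ℝ) × (Fin d → ℝ)}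
    (hx : Real.exp (-1) * volume.real C ≤ volume.real (C ∩ {u | L x ≤ L u})) (hp : p ∈ C)
    (hc : c ≤ L (homothety p (roundingRatio k) x)) :
    ENNReal.ofReal (depthBound k (n + d)) * mixVol n d C ≤ mixVol n d (C ∩ {u | c ≤ L u}) := by
  have := isAddHaarMeasure_volume_prod n d
  set r := roundingRatio k with hr
  have hr₀ : 0 < r := roundingRatio_pos hk
  have hr₁ : r < 1 := roundingRatio_lt_one (by linarith)
  have hrk : 1 / 2 ≤ (1 - r) * k := (one_sub_roundingRatio_mul (by linarith)).ge
  obtain ⟨u, hu, hmin⟩ := hcomp.exists_isMinOn ⟨p, hp⟩ L.continuous.continuousOn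
  obtain ⟨t, ht⟩ : ∃ t, (1 - r) * L u + r * t = L (homothety p r x) :=
    ⟨(L (homothety p r x) - (1 - r) * L u) / r, by field_simp; ring⟩
  have hbody := mul_measureReal_le_mul_measureReal_superlevel volume hconv hcomp L hx hp hu hr₀
    hr₁.le ht
  rw [Module.finrank_prod, Module.finrank_fin_fun, Module.finrank_fin_fun] at hbody
  set q := r ^ (n + d)
  have hc' : ∀ v ∈ C, c ≤ (1 - r) * L v + r * t := fun v hv =>
    (hc.trans ht.ge).trans <| by
      have : L u ≤ L v := hmin hv
      gcongr
  calc ENNReal.ofReal (depthBound k (n + d)) * mixVol n d C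
      = ENNReal.ofReal (q * (1 + Real.exp (-1)) - 1) * (ENNReal.ofReal q * mixVol n d C) := by
        rw [depthBound, ← hr, mul_comm, ENNReal.ofReal_mul (by positivity)]
        ring
    _ ≤ ENNReal.ofReal (q * (1 + Real.exp (-1)) - 1) * volume C := by
        gcongr
        exact ofReal_pow_mul_mixVol_le_volume hbox hr₀ hr₁ hrk hcomp.measurableSet
          fun v hv w hw => homothety_mem_of_convex hconv hv hw hr₀.le hr₁.le
    _ ≤ ENNReal.ofReal q * volume (C ∩ {w | t ≤ L w}) := by
        rw [← ofReal_measureReal hcomp.measure_lt_top.ne, ← ofReal_measureReal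
          (measure_ne_top_of_subset inter_subset_left hcomp.measure_lt_top.ne),
          ← ENNReal.ofReal_mul' measureReal_nonneg, ← ENNReal.ofReal_mul (by positivity)]
        exact ENNReal.ofReal_le_ofReal hbody
    _ ≤ mixVol n d (C ∩ {w | c ≤ L w}) :=
        ofReal_pow_mul_volume_le_mixVol hbox hr₀ hr₁ hrk
          (hcomp.measurableSet.inter
            (measurableSet_le measurable_const L.continuous.measurable))
          fun v hv => mapsTo_homothety_inter_superlevel hconv hv hr₀.le hr₁.le (hc' v hv)

end Depth

theorem oertel_under_linear_width_general (n d : ℕ) (C : Set ((Fin n → ℝ) × (Fin d → ℝ)))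
    (hconv : Convex ℝ C) (hcomp : IsCompact C) (z₀ : Fin n → ℝ) (k : ℝ) (hk : 1 / 2 < k)
    (hbox : Metric.closedBall z₀ k ⊆ Prod.fst '' C) :
    ∃ ystar ∈ C ∩ mixLattice n d,
      ENNReal.ofReal (depthBound k (n + d)) * mixVol n d (C ∩ mixLattice n d) ≤
        depth n d (C ∩ mixLattice n d) ystar := by
  have hC₀ : C.Nonempty :=
    ((Metric.nonempty_closedBall.2 (by linarith)).mono hbox).of_image
  obtain ⟨x, hxC, hx⟩ :=
    (isPrekopaLeindler_volume_prod n d).exists_exp_neg_one_mul_measureReal_le hconv hcomp hC₀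
  have hk₀ : 0 < k := by linarith
  have hr₁ := roundingRatio_lt_one hk₀
  obtain ⟨p, hp, hpx⟩ := exists_mem_homothety_fst_eq hbox hr₁
    (one_sub_roundingRatio_mul hk₀.ne').ge (dist_round_le (AffineMap.homothety z₀ _ x.1))
  refine ⟨AffineMap.homothety p (roundingRatio k) x,
    ⟨homothety_mem_of_convex hconv hp hxC (roundingRatio_pos hk).le hr₁.le, _, hpx⟩,
    le_iInf₂ fun a c => le_iInf₂ fun _ hc => ?_⟩
  rw [inter_right_comm, mixVol_inter_mixLattice, mixVol_inter_mixLattice]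
  exact ofReal_depthBound_mul_mixVol_le hconv hcomp hk hbox (dotL n d a) (hx _) hp hc

/-- Oertel's conjecture under the linear-width hypothesis `k ≥ 3e(n+d)`: there is a point of
depth at least `H_d(S)/(2e) ≥ H_d(S)/(2ⁿ e)`. -/
theorem oertel_under_linear_width (n d : ℕ) (hn : 1 ≤ n) (hd : 1 ≤ d)
    (C : Set ((Fin n → ℝ) × (Fin d → ℝ)))
    (hconv : Convex ℝ C) (hcomp : IsCompact C) (hint : (interior C).Nonempty)
    (z₀ : Fin n → ℝ) (k : ℝ)
    (hk : 3 * Real.exp 1 * (n + d) ≤ k)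
    (hbox : Metric.closedBall z₀ k ⊆ Prod.fst '' C) :
    ∃ ystar ∈ C ∩ mixLattice n d,
      ∀ (a : (Fin n → ℝ) × (Fin d → ℝ)) (c : ℝ), a ≠ 0 → c ≤ dotP n d a ystar →
        ENNReal.ofReal (1 / (2 * Real.exp 1)) * mixVol n d (C ∩ mixLattice n d) ≤
          mixVol n d ((C ∩ mixLattice n d) ∩ {u | c ≤ dotP n d a u}) ∧
        ENNReal.ofReal (1 / (2 ^ n * Real.exp 1)) * mixVol n d (C ∩ mixLattice n d) ≤
          ENNReal.ofReal (1 / (2 * Real.exp 1)) * mixVol n d (C ∩ mixLattice n d) := by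
  have hdim : 1 ≤ n + d := hn.trans (Nat.le_add_right n d)
  have hk' : 3 * Real.exp 1 * (n + d : ℕ) ≤ k := by rwa [Nat.cast_add]
  have hhalf : 1 / 2 < k := by
    nlinarith [Real.one_le_exp zero_le_one, (Nat.one_le_cast (α := ℝ)).2 hdim]
  obtain ⟨y, hy, hdepth⟩ :=
    oertel_under_linear_width_general n d C hconv hcomp z₀ k hhalf hbox
  refine ⟨y, hy, fun a c ha hc => ⟨?_, ?_⟩⟩
  · calc ENNReal.ofReal (1 / (2 * Real.exp 1)) * mixVol n d (C ∩ mixLattice n d)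
        = ENNReal.ofReal (Real.exp (-1) / 2) * mixVol n d (C ∩ mixLattice n d) := by
          rw [Real.exp_neg, inv_eq_one_div, div_div, mul_comm 2]
      _ ≤ ENNReal.ofReal (depthBound k (n + d)) * mixVol n d (C ∩ mixLattice n d) := by
          gcongr
          exact half_exp_neg_one_le_depthBound hdim hk'
      _ ≤ depth n d (C ∩ mixLattice n d) y := hdepth
      _ ≤ mixVol n d (C ∩ mixLattice n d ∩ {u | c ≤ dotP n d a u}) :=
          iInf₂_le_of_le a c (iInf₂_le ha hc)
  · gcongr
    exact le_self_pow₀ one_le_two (Nat.one_le_iff_ne_zero.1 hn)
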